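/- Let k ≥ 1 and d ≥ 1 be integers, set n = k + d − 1 (the smallest length permitted by the Singleton bound for dimension k and minimum distance d), and suppose at least one of k, n is odd. Let p be a prime not dividing n. Then there exist β ≥ 1 and a linear code C ⊆ GF(p^β)^n with dim C = k, minimum distance exactly d, and C ∩ C^⊥ = {0}; that is, an LCD MDS code of dimension k and minimum distance d exists with the smallest possible length n = k + d − 1 over a finite field of characteristic p. -/

import Mathlib

/-- Hamming weight of a vector: the number of nonzero coordinates. -/
noncomputable def hWeight {F : Type*} [Field F] {n : ℕ} (v : Fin n → F) : ℕ :=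
  open scoped Classical in
  (Finset.univ.filter fun m => v m ≠ 0).card

/-- The dual code of `C` with respect to the standard bilinear form. -/
def dualCode {F : Type*} [Field F] {n : ℕ} (C : Submodule F (Fin n → F)) :
    Submodule F (Fin n → F) where
  carrier := {v | ∀ u ∈ C, ∑ m, u m * v m = 0}
  add_mem' := by
    intro a b ha hb u hu
    have h : ∑ m, u m * (a + b) m = (∑ m, u m * a m) + ∑ m, u m * b m := by
      rw [← Finset.sum_add_distrib]
      exact Finset.sum_congr rfl fun m _ => by simp [mul_add]
    rw [h, ha u hu, hb u hu, add_zero]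
  zero_mem' := by intro u hu; simp
  smul_mem' := by
    intro c a ha u hu
    have h : ∑ m, u m * (c • a) m = c * ∑ m, u m * a m := by
      rw [Finset.mul_sum]
      exact Finset.sum_congr rfl fun m _ => by simp [smul_eq_mul]; ring
    rw [h, ha u hu, mul_zero]

/-- Minimum distance of a code: the least Hamming weight of a nonzero codeword. -/
noncomputable def minDist {F : Type*} [Field F] {n : ℕ} (C : Submodule F (Fin n → F)) : ℕ :=
  sInf {d | ∃ v ∈ C, v ≠ 0 ∧ hWeight v = d}

/-!
A generator matrix all of whose maximal minors are nonzero generates an MDS code, and this property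
survives rescaling the columns by nonzero factors; a Vandermonde matrix on `n` distinct points has
it. By Massey's criterion the code generated by `G` is LCD as soon as `det (G Gᵀ) ≠ 0`, and
`G Gᵀ = ∑ gₘ gₘᵀ` over the columns `gₘ` of `G`. A maximal minor gives a set of columns whose partial
sum is already invertible. By the matrix determinant lemma, adding a further term `t² g gᵀ`
multiplies the determinant by `1 + c t²` for some scalar `c`, so a field with more than three
elements has a `t ≠ 0` which keeps it nonzero. Hence the columns can be rescaled one at a time
until the code is LCD. Over `GF(p^β)` with `β` large there are enough points and enough scalars.
-/

open Cardinal Matrix Polynomial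

variable {F : Type*} [Field F]

section GeneratorMatrix

variable {ι κ : Type*} [Fintype ι] {n : ℕ}

/-- The linear code generated by the rows of `G`, as the range of the encoding map `u ↦ u ᵥ* G`. -/
def rowCode (G : Matrix ι (Fin n) F) : Submodule F (Fin n → F) :=
  LinearMap.range G.vecMulLinear

/-- `G` generates an MDS code: all maximal minors of `G` are nonzero. The minors are indexed by
embeddings of the row index into the column index, so each one occurs once for every ordering
of its columns, and the condition is vacuous if there are more rows than columns. -/
def IsMDSGenerator [DecidableEq ι] (G : Matrix ι κ F) : Prop :=
  ∀ e : ι ↪ κ, (G.submatrix id e).det ≠ 0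

lemma vecMul_mem_rowCode (G : Matrix ι (Fin n) F) (u : ι → F) : u ᵥ* G ∈ rowCode G :=
  ⟨u, rfl⟩

lemma rowCode_inf_dualCode_eq_bot [DecidableEq ι] {G : Matrix ι (Fin n) F}
    (hG : (G * Gᵀ).det ≠ 0) : rowCode G ⊓ dualCode (rowCode G) = ⊥ := by
  rw [eq_bot_iff]
  rintro _ ⟨⟨u, rfl⟩, hdual⟩
  suffices hu : u ᵥ* (G * Gᵀ) = 0 by
    rw [eq_zero_of_vecMul_eq_zero hG hu]
    exact map_zero G.vecMulLinear
  ext i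
  have hrow : G.row i ⬝ᵥ u ᵥ* G = 0 :=
    hdual _ (single_one_vecMul i G ▸ vecMul_mem_rowCode G (Pi.single i 1))
  rw [← vecMul_vecMul, vecMul_transpose]
  exact hrow

lemma hWeight_add_card_zeros [DecidableEq F] (v : Fin n → F) :
    hWeight v + Fintype.card {m // v m = 0} = n := by
  classical
  have hsplit := Finset.card_filter_add_card_filter_not (s := Finset.univ) fun m => v m ≠ 0
  simp only [not_not, Finset.card_fin] at hsplit
  rw [Fintype.card_subtype, hWeight]
  convert hsplit

namespace IsMDSGenerator

variable [DecidableEq ι]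

lemma mul_diagonal [Fintype κ] [DecidableEq κ] {G : Matrix ι κ F} (hG : IsMDSGenerator G)
    {v : κ → F} (hv : ∀ m, v m ≠ 0) : IsMDSGenerator (G * diagonal v) := by
  intro e
  have hminor : (G * diagonal v).submatrix id e = G.submatrix id e * diagonal (v ∘ e) := by
    ext i j
    simp
  rw [hminor, det_mul, det_diagonal]
  exact mul_ne_zero (hG e) (Finset.prod_ne_zero_iff.2 fun j _ => hv (e j))

variable {G : Matrix ι (Fin n) F}

lemma eq_zero_of_vecMul_apply_eq_zero (hG : IsMDSGenerator G) (e : ι ↪ Fin n) {u : ι → F}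
    (hu : ∀ j, (u ᵥ* G) (e j) = 0) : u = 0 :=
  eq_zero_of_vecMul_eq_zero (hG e) (funext hu)

lemma finrank_rowCode (hG : IsMDSGenerator G) (hn : Fintype.card ι ≤ n) :
    Module.finrank F (rowCode G) = Fintype.card ι := by
  obtain ⟨e⟩ : Nonempty (ι ↪ Fin n) := Function.Embedding.nonempty_of_card_le (by simpa using hn)
  have hinj : Function.Injective G.vecMulLinear :=
    (injective_iff_map_eq_zero _).2 fun u hu =>
      hG.eq_zero_of_vecMul_apply_eq_zero e fun j => congrFun hu (e j)
  rw [rowCode, LinearMap.finrank_range_of_inj hinj, Module.finrank_fintype_fun_eq_card]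

lemma lt_hWeight_add_card (hG : IsMDSGenerator G) {c : Fin n → F} (hc : c ∈ rowCode G)
    (hc0 : c ≠ 0) : n < hWeight c + Fintype.card ι := by
  classical
  obtain ⟨u, rfl⟩ := hc
  by_contra! hle
  have hzeros := hWeight_add_card_zeros (G.vecMulLinear u)
  obtain ⟨e⟩ : Nonempty (ι ↪ {m // G.vecMulLinear u m = 0}) :=
    Function.Embedding.nonempty_of_card_le (by omega)
  have hu : u = 0 :=
    hG.eq_zero_of_vecMul_apply_eq_zero (e.trans (.subtype _)) fun j => (e j).2
  exact hc0 (by rw [hu, map_zero])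

lemma exists_hWeight_add_card_le [Nonempty ι] (hG : IsMDSGenerator G)
    (hn : Fintype.card ι ≤ n) :
    ∃ c ∈ rowCode G, c ≠ 0 ∧ hWeight c + Fintype.card ι ≤ n + 1 := by
  classical
  obtain ⟨e⟩ : Nonempty (ι ↪ Fin n) := Function.Embedding.nonempty_of_card_le (by simpa using hn)
  let i₀ : ι := Classical.arbitrary ι
  obtain ⟨u, hu⟩ : ∃ u, u ᵥ* G.submatrix id e = Pi.single i₀ 1 :=
    vecMul_surjective_iff_isUnit.2 ((isUnit_iff_isUnit_det _).2 (hG e).isUnit) _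
  have hcodeword (j : ι) : (u ᵥ* G) (e j) = Pi.single (M := fun _ => F) i₀ 1 j := congrFun hu j
  refine ⟨u ᵥ* G, vecMul_mem_rowCode G u, fun h0 => ?_, ?_⟩
  · simpa [h0] using hcodeword i₀
  · let zeroAt (j : {j // j ≠ i₀}) : {m // (u ᵥ* G) m = 0} :=
      ⟨e j, by rw [hcodeword, Pi.single_eq_of_ne j.2]⟩
    have hzeroAt : Function.Injective zeroAt := fun j j' h =>
      Subtype.ext (e.injective (congrArg Subtype.val h))
    have hcard := Fintype.card_le_of_injective zeroAt hzeroAt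
    have hzeros := hWeight_add_card_zeros (u ᵥ* G)
    rw [Fintype.card_subtype_compl, Fintype.card_subtype_eq] at hcard
    omega

lemma minDist_rowCode_add_card [Nonempty ι] (hG : IsMDSGenerator G)
    (hn : Fintype.card ι ≤ n) : minDist (rowCode G) + Fintype.card ι = n + 1 := by
  obtain ⟨c, hc, hc0, hle⟩ := hG.exists_hWeight_add_card_le hn
  have hupper : minDist (rowCode G) ≤ hWeight c := Nat.sInf_le ⟨c, hc, hc0, rfl⟩
  obtain ⟨cmin, hcmin, hcmin0, hweight⟩ :
      ∃ c ∈ rowCode G, c ≠ 0 ∧ hWeight c = minDist (rowCode G) :=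
    Nat.sInf_mem (s := {w | ∃ v ∈ rowCode G, v ≠ 0 ∧ hWeight v = w}) ⟨_, c, hc, hc0, rfl⟩
  have hlower := hG.lt_hWeight_add_card hcmin hcmin0
  omega

end IsMDSGenerator

lemma isMDSGenerator_transpose_rectVandermonde {x : κ → F} (hx : Function.Injective x) (k : ℕ) :
    IsMDSGenerator (rectVandermonde x 1 k)ᵀ := by
  intro e
  have hminor : (rectVandermonde x 1 k)ᵀ.submatrix id e = (vandermonde (x ∘ e))ᵀ := by
    ext i j
    simp [rectVandermonde_apply, vandermonde_apply]
  rw [hminor, det_transpose, det_vandermonde_ne_zero_iff]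
  exact hx.comp e.injective

end GeneratorMatrix

section Rescaling

variable {ι κ : Type*}

lemma mul_diagonal_mul_transpose_eq_sum {R : Type*} [CommSemiring R] [Fintype κ] [DecidableEq κ]
    (G : Matrix ι κ R) (v : κ → R) :
    G * diagonal v * (G * diagonal v)ᵀ = ∑ m, v m ^ 2 • vecMulVec (G.col m) (G.col m) := by
  ext i j
  rw [mul_apply, Matrix.sum_apply]
  refine Finset.sum_congr rfl fun m _ => ?_
  simp only [transpose_apply, mul_diagonal, Matrix.smul_apply, vecMulVec_apply, col_apply,
    smul_eq_mul]
  ring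

lemma exists_ne_zero_one_add_mul_sq_ne_zero (hF : 3 < #F) (c : F) :
    ∃ t : F, t ≠ 0 ∧ 1 + c * t ^ 2 ≠ 0 := by
  let f : F[X] := X * (1 + C c * X ^ 2)
  have hf : f ≠ 0 := fun h => by simpa [f] using congrArg (coeff · 1) h
  have hdeg : f.natDegree ≤ 3 := by
    unfold f
    compute_degree
  obtain ⟨t, ht⟩ := exists_eval_ne_zero_of_natDegree_lt_card f hf
    ((Nat.cast_le.2 hdeg).trans_lt (by exact_mod_cast hF))
  have hprod : t * (1 + c * t ^ 2) ≠ 0 := by simpa [f] using ht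
  exact ⟨t, left_ne_zero_of_mul hprod, right_ne_zero_of_mul hprod⟩

variable [Fintype ι] [DecidableEq ι]

lemma det_add_vecMulVec {R : Type*} [CommRing R] {A : Matrix ι ι R} (hA : IsUnit A.det)
    (u v : ι → R) : (A + vecMulVec u v).det = A.det * (1 + v ⬝ᵥ A⁻¹ *ᵥ u) := by
  rw [vecMulVec_eq Unit, det_add_replicateCol_mul_replicateRow hA, Matrix.mul_assoc,
    ← replicateCol_mulVec, det_unique (n := Unit), Matrix.add_apply, one_apply_eq,
    replicateRow_mul_replicateCol_apply]

lemma exists_ne_zero_det_add_sq_smul_vecMulVec_ne_zero (hF : 3 < #F) {A : Matrix ι ι F}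
    (hA : A.det ≠ 0) (g : ι → F) : ∃ t : F, t ≠ 0 ∧ (A + t ^ 2 • vecMulVec g g).det ≠ 0 := by
  obtain ⟨t, ht, hdet⟩ := exists_ne_zero_one_add_mul_sq_ne_zero hF (g ⬝ᵥ A⁻¹ *ᵥ g)
  refine ⟨t, ht, ?_⟩
  have hupdate : (A + t ^ 2 • vecMulVec g g).det = A.det * (1 + (g ⬝ᵥ A⁻¹ *ᵥ g) * t ^ 2) := by
    rw [← smul_vecMulVec, det_add_vecMulVec hA.isUnit, mulVec_smul, dotProduct_smul, smul_eq_mul,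
      mul_comm (t ^ 2)]
  rw [hupdate]
  exact mul_ne_zero hA hdet

lemma exists_forall_ne_zero_det_sum_sq_smul_vecMulVec_ne_zero [Fintype κ] (hF : 3 < #F)
    (g : κ → ι → F) (s : Finset κ) (hs : (∑ m ∈ s, vecMulVec (g m) (g m)).det ≠ 0) :
    ∃ v : κ → F, (∀ m, v m ≠ 0) ∧ (∑ m, v m ^ 2 • vecMulVec (g m) (g m)).det ≠ 0 := by
  classical
  suffices hunion : ∀ s' : Finset κ, ∃ v : κ → F, (∀ m, v m ≠ 0) ∧
      (∑ m ∈ s' ∪ s, v m ^ 2 • vecMulVec (g m) (g m)).det ≠ 0 by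
    simpa only [Finset.union_eq_left.2 (Finset.subset_univ s)] using hunion Finset.univ
  intro s'
  induction s' using Finset.induction_on with
  | empty => exact ⟨1, by simp, by simpa using hs⟩
  | insert a s' _ ih =>
    obtain ⟨v, hv, hdet⟩ := ih
    rw [Finset.insert_union]
    by_cases ha : a ∈ s' ∪ s
    · exact ⟨v, hv, by rwa [Finset.insert_eq_of_mem ha]⟩
    obtain ⟨t, ht, hdet'⟩ := exists_ne_zero_det_add_sq_smul_vecMulVec_ne_zero hF hdet (g a)
    have hagree : ∀ m ∈ s' ∪ s, Function.update v a t m = v m := fun m hm =>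
      Function.update_of_ne (ne_of_mem_of_not_mem hm ha) _ _
    refine ⟨Function.update v a t, fun m => ?_, ?_⟩
    · rcases eq_or_ne m a with rfl | hm <;> simp [*]
    · rw [Finset.sum_insert ha, Function.update_self, add_comm,
        Finset.sum_congr rfl fun m hm => by rw [hagree m hm]]
      exact hdet'

lemma exists_mul_diagonal_det_gram_ne_zero [Fintype κ] [DecidableEq κ] (hF : 3 < #F)
    {G : Matrix ι κ F} {e : ι ↪ κ} (he : (G.submatrix id e).det ≠ 0) :
    ∃ v : κ → F, (∀ m, v m ≠ 0) ∧ (G * diagonal v * (G * diagonal v)ᵀ).det ≠ 0 := by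
  have hgram : ∑ m ∈ Finset.univ.map e, vecMulVec (G.col m) (G.col m) =
      G.submatrix id e * (G.submatrix id e)ᵀ := by
    ext i j
    simp [mul_apply, Matrix.sum_apply, vecMulVec_apply]
  simp only [mul_diagonal_mul_transpose_eq_sum]
  refine exists_forall_ne_zero_det_sum_sq_smul_vecMulVec_ne_zero hF G.col (Finset.univ.map e) ?_
  rw [hgram, det_mul, det_transpose]
  exact mul_ne_zero he he

end Rescaling

lemma natCast_lt_mk_galoisField (p : ℕ) [Fact p.Prime] {β : ℕ} (hβ : β ≠ 0) :
    (β : Cardinal) < #(GaloisField p β) := by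
  rw [← Nat.cast_card, GaloisField.card p β hβ]
  exact_mod_cast Nat.lt_pow_self (Fact.out : p.Prime).one_lt

theorem exists_LCD_MDS_min_length_general {k d n : ℕ} (hk : 1 ≤ k) (hd : 1 ≤ d)
    (hn : n = k + d - 1) (hF : 3 < #F) (hnF : n ≤ #F) :
    ∃ C : Submodule F (Fin n → F),
      Module.finrank F C = k ∧ minDist C = d ∧ C ⊓ dualCode C = ⊥ := by
  have hkn : k ≤ n := by omega
  have hcard : Fintype.card (Fin k) ≤ n := by rwa [Fintype.card_fin]
  have : Nonempty (Fin k) := ⟨⟨0, hk⟩⟩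
  obtain ⟨x⟩ : Nonempty (Fin n ↪ F) := lift_mk_le'.1 (by simpa using hnF)
  have hvand := isMDSGenerator_transpose_rectVandermonde x.injective k
  obtain ⟨v, hv, hgram⟩ := exists_mul_diagonal_det_gram_ne_zero hF (hvand (Fin.castLEEmb hkn))
  have hMDS := hvand.mul_diagonal hv
  refine ⟨rowCode ((rectVandermonde x 1 k)ᵀ * diagonal v), ?_, ?_,
    rowCode_inf_dualCode_eq_bot hgram⟩
  · rw [hMDS.finrank_rowCode hcard, Fintype.card_fin]
  · have hdist := hMDS.minDist_rowCode_add_card hcard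
    rw [Fintype.card_fin] at hdist
    omega

/-- For dimension `k ≥ 1` and distance `d ≥ 1`, with `n = k + d − 1`
(the smallest length permitted by the Singleton bound), if at least one of `k, n` is odd
and `p` is a prime not dividing `n`, then there exists an LCD MDS code of dimension `k`
and minimum distance exactly `d`, of length `n`, over some finite field `GF(p^β)` of
characteristic `p`. -/
theorem exists_LCD_MDS_min_length (k d p : ℕ) [Fact p.Prime] (hk : 1 ≤ k) (hd : 1 ≤ d)
    (n : ℕ) (hn : n = k + d - 1) (hodd : Odd k ∨ Odd n) (hpn : ¬ p ∣ n) :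
    ∃ β : ℕ, 1 ≤ β ∧ ∃ C : Submodule (GaloisField p β) (Fin n → GaloisField p β),
      Module.finrank (GaloisField p β) C = k ∧ minDist C = d ∧ C ⊓ dualCode C = ⊥ := by
  have hcard := natCast_lt_mk_galoisField p (β := n + 2) (by omega)
  exact ⟨n + 2, by omega, exists_LCD_MDS_min_length_general hk hd hn
    (lt_of_le_of_lt (by exact_mod_cast (by omega : 3 ≤ n + 2)) hcard)
    (le_trans (by exact_mod_cast (by omega : n ≤ n + 2)) hcard.le)⟩
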